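/- For 0 < q < 1, the deformed exponential function f(x) = Σ_{n=0}^∞ x^n q^{n(n-1)/2}/n! admits the infinite product representation f(x) = ∏_{n=1}^∞ (1 − x/x_n), where (x_n)_{n≥1} is the strictly decreasing sequence of its (negative real) zeros. -/

import Mathlib

/-!
The polynomials `P N = ∑ n, choose N n * q ^ (n * (n - 1) / 2) * X ^ n` satisfy
`P (N + 1) = P N + X * (P N)(q X)`, and `P N (z / N) → f z`. If `P = ∏ k < N, (1 + a k * X)` with
`a (k + 1) < q * a k`, then the signs of `P + X * P(q X)` at the zeros of `P` and of `P(q X)` force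
`P + X * P(q X) = ∏ k ≤ N, (1 + b k * X)` with `a k < b k < q * a (k - 1)`, so the separation by the
factor `q` is preserved. Hence `P N (z / N) = ∏ k, (1 + b N k * z)` with `b N (k + 1) ≤ q * b N k`,
and `∑ k, b N k = 1` by comparing the coefficients of `z`. These sequences form a compact set on
which the product depends continuously on the sequence, so `f z = ∏ k, (1 + c k * z)` for a limit
point `c`. No `c k` vanishes, since otherwise the product would be finite and `f` a polynomial.
-/

open Polynomial Filter Topology

lemma neg_one_pow_mul_prod_range_one_sub {R : Type*} [CommRing R] (g : ℕ → R) (N : ℕ) :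
    (-1) ^ N * ∏ k ∈ Finset.range N, (1 - g k) = ∏ k ∈ Finset.range N, (g k - 1) :=
  calc _ = ∏ k ∈ Finset.range N, -(1 - g k) := by rw [Finset.prod_neg, Finset.card_range]
    _ = _ := Finset.prod_congr rfl fun k _ => neg_sub 1 (g k)

lemma exists_eval_neg_eq_zero_of_sign_change {P : ℝ[X]} {s t : ℝ} {k : ℕ} (hst : s < t)
    (hs : 0 < (-1) ^ k * P.eval (-s)) (ht : 0 < (-1) ^ (k + 1) * P.eval (-t)) :
    ∃ r ∈ Set.Ioo s t, P.eval (-r) = 0 := by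
  have hcont : ContinuousOn (fun r => (-1 : ℝ) ^ k * P.eval (-r)) (Set.Icc s t) := by fun_prop
  obtain ⟨r, hr, hr0⟩ := intermediate_value_Ioo' hst.le hcont
    (show (0 : ℝ) ∈ Set.Ioo _ _ from ⟨by rw [pow_succ] at ht; linarith, hs⟩)
  exact ⟨r, hr, by simpa using hr0⟩

lemma le_natDegree_of_forall_mul_pow_le_eval {P : ℝ[X]} {A : ℝ} {n : ℕ} (hA : 0 < A)
    (h : ∀ t, 0 ≤ t → A * t ^ n ≤ P.eval t) : n ≤ P.natDegree := by
  by_contra! hn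
  have h_tendsto : Tendsto (fun t => P.eval t / (X ^ n : ℝ[X]).eval t) atTop (𝓝 0) :=
    div_tendsto_atTop_zero_of_degree_lt P (X ^ n)
      (degree_lt_degree (by rwa [natDegree_X_pow]))
  refine hA.not_ge (ge_of_tendsto h_tendsto ?_)
  filter_upwards [eventually_gt_atTop 0] with t ht
  rw [eval_pow, eval_X]
  exact (le_div_iff₀ (pow_pos ht n)).2 (h t ht.le)

lemma tprod_one_add_eq_zero_iff {ι R : Type*} [NormedCommRing R] [NormOneClass R]
    [NormMulClass R] [CompleteSpace R] {g : ι → R} (hg : Summable fun i => ‖g i‖) :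
    ∏' i, (1 + g i) = 0 ↔ ∃ i, 1 + g i = 0 := by
  refine ⟨fun h => ?_, tprod_of_exists_eq_zero⟩
  contrapose! h
  exact tprod_one_add_ne_zero_of_summable h hg

section LinProd

/-- The polynomial with constant term `1` and zeros `-1 / a k` for `k < N`. Parametrizing by the
negated reciprocals of the zeros keeps the coefficients bounded as `N` grows. -/
noncomputable def linProd {R : Type*} [CommSemiring R] (a : ℕ → R) (N : ℕ) : R[X] :=
  ∏ k ∈ Finset.range N, (1 + C (a k) * X)

section CommSemiring

variable {R : Type*} [CommSemiring R]

lemma eval_linProd (a : ℕ → R) (N : ℕ) (x : R) :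
    (linProd a N).eval x = ∏ k ∈ Finset.range N, (1 + a k * x) := by
  simp [linProd, eval_prod]

lemma map_linProd {S : Type*} [CommSemiring S] (φ : R →+* S) (a : ℕ → R) (N : ℕ) :
    (linProd a N).map φ = linProd (fun k => φ (a k)) N := by
  simp [linProd, Polynomial.map_prod]

lemma natDegree_linProd_le (a : ℕ → R) (N : ℕ) : (linProd a N).natDegree ≤ N := by
  have h_factor (k : ℕ) : (1 + C (a k) * X).natDegree ≤ 1 := by compute_degree
  exact (natDegree_prod_le _ _).trans
    ((Finset.sum_le_card_nsmul _ _ 1 fun k _ => h_factor k).trans (by simp))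

lemma coeff_zero_linProd (a : ℕ → R) (N : ℕ) : (linProd a N).coeff 0 = 1 := by
  simp [coeff_zero_eq_eval_zero, eval_linProd]

lemma coeff_one_linProd (a : ℕ → R) (N : ℕ) :
    (linProd a N).coeff 1 = ∑ k ∈ Finset.range N, a k := by
  induction N with
  | zero => simp [linProd, coeff_one]
  | succ N ih =>
    have h_succ : linProd a (N + 1) = linProd a N * (1 + C (a N) * X) := Finset.prod_range_succ ..
    rw [h_succ, mul_coeff_one, ih, coeff_zero_linProd, Finset.sum_range_succ]
    simp [coeff_one, add_comm]

end CommSemiring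

lemma eval_linProd_neg_inv {K : Type*} [Field K] {a : ℕ → K} {N k : ℕ} (hk : k < N)
    (hak : a k ≠ 0) : (linProd a N).eval (-(a k)⁻¹) = 0 := by
  rw [eval_linProd]
  exact Finset.prod_eq_zero (Finset.mem_range.2 hk) (by simp [hak])

lemma eq_linProd_of_eval_neg_inv_eq_zero {K : Type*} [Field K] {P : K[X]} {b : ℕ → K} {N : ℕ}
    (hdeg : P.natDegree ≤ N) (h_zero : P.eval 0 = 1) (hb : ∀ k < N, b k ≠ 0)
    (hinj : Set.InjOn b (Set.Iio N)) (hroot : ∀ k < N, P.eval (-(b k)⁻¹) = 0) :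
    P = linProd b N := by
  classical
  set Z : Finset K := (Finset.range N).image fun k => -(b k)⁻¹
  have hZ_card : Z.card = N := by
    rw [Finset.card_image_of_injOn, Finset.card_range]
    intro i hi j hj hij
    exact hinj (by simpa using hi) (by simpa using hj) (inv_injective (neg_injective hij))
  have hZ_zero : (0 : K) ∉ Z := by
    simpa [Z] using hb
  refine eq_of_natDegree_lt_card_of_eval_eq' P _ (insert 0 Z) ?_ ?_
  · simp only [Finset.forall_mem_insert, Z, Finset.forall_mem_image, Finset.mem_range]
    refine ⟨by simp [h_zero, eval_linProd], fun k hk => ?_⟩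
    rw [hroot k hk, eval_linProd_neg_inv hk (hb k hk)]
  · rw [Finset.card_insert_of_notMem hZ_zero, hZ_card]
    exact Nat.lt_succ_of_le (max_le hdeg (natDegree_linProd_le b N))

lemma eval_linProd_neg {R : Type*} [CommRing R] (a : ℕ → R) (N : ℕ) (s : R) :
    (linProd a N).eval (-s) = ∏ k ∈ Finset.range N, (1 - a k * s) := by
  simp [eval_linProd, sub_eq_add_neg]

lemma neg_one_pow_mul_eval_linProd_neg_pos {a : ℕ → ℝ} {N k : ℕ} {s : ℝ} (hk : k ≤ N)
    (h_lt : ∀ j < k, 1 < a j * s) (h_ge : ∀ j, k ≤ j → j < N → a j * s < 1) :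
    0 < (-1) ^ k * (linProd a N).eval (-s) := by
  rw [eval_linProd_neg, ← Finset.prod_range_mul_prod_Ico _ hk, ← mul_assoc,
    neg_one_pow_mul_prod_range_one_sub]
  refine mul_pos (Finset.prod_pos fun j hj => ?_) (Finset.prod_pos fun j hj => ?_)
  · exact sub_pos.2 (h_lt j (Finset.mem_range.1 hj))
  · obtain ⟨hkj, hjN⟩ := Finset.mem_Ico.1 hj
    exact sub_pos.2 (h_ge j hkj hjN)

end LinProd

section DilationStep

/-- The operator `P ↦ P + X * P(q X)`, which leads from each deformed binomial to the next. -/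
noncomputable def dilationStep {R : Type*} [CommSemiring R] (q : R) (P : R[X]) : R[X] :=
  P + X * P.comp (C q * X)

variable {R : Type*} [CommSemiring R]

lemma eval_dilationStep (q : R) (P : R[X]) (x : R) :
    (dilationStep q P).eval x = P.eval x + x * P.eval (q * x) := by
  simp [dilationStep, eval_comp]

lemma natDegree_dilationStep_le (q : R) (P : R[X]) :
    (dilationStep q P).natDegree ≤ P.natDegree + 1 := by
  have h_comp : (P.comp (C q * X)).natDegree ≤ P.natDegree :=
    natDegree_comp_le.trans (mul_le_of_le_one_right (Nat.zero_le _) (by compute_degree))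
  refine natDegree_add_le_of_degree_le (Nat.le_succ _) (natDegree_mul_le.trans ?_)
  linarith [natDegree_X_le (R := R)]

end DilationStep

section DeformedBinomial

variable {R : Type*} [CommSemiring R]

/-- The deformation `∑ n, choose N n * q ^ (n * (n - 1) / 2) * X ^ n` of the binomial
`(1 + X) ^ N`, which is the case `q = 1`. -/
noncomputable def deformedBinomial (q : R) (N : ℕ) : R[X] :=
  ∑ n ∈ Finset.range (N + 1), C (N.choose n * q ^ (n * (n - 1) / 2)) * X ^ n

lemma coeff_deformedBinomial (q : R) (N n : ℕ) :
    (deformedBinomial q N).coeff n = N.choose n * q ^ (n * (n - 1) / 2) := by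
  simp only [deformedBinomial, finsetSum_coeff, coeff_C_mul_X_pow, Finset.sum_ite_eq,
    Finset.mem_range]
  split_ifs with hn
  · rfl
  · rw [Nat.choose_eq_zero_of_lt (by omega), Nat.cast_zero, zero_mul]

lemma map_deformedBinomial {S : Type*} [CommSemiring S] (φ : R →+* S) (q : R) (N : ℕ) :
    (deformedBinomial q N).map φ = deformedBinomial (φ q) N := by
  ext n
  simp [coeff_deformedBinomial]

lemma deformedBinomial_zero (q : R) : deformedBinomial q 0 = 1 := by
  simp [deformedBinomial]

lemma deformedBinomial_succ (q : R) (N : ℕ) :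
    deformedBinomial q (N + 1) = dilationStep q (deformedBinomial q N) := by
  ext n
  cases n with
  | zero => simp [dilationStep, coeff_deformedBinomial]
  | succ n =>
    have h_exp : (n + 1) * (n + 1 - 1) / 2 = n * (n - 1) / 2 + n := by
      rw [← Nat.choose_two_right, ← Nat.choose_two_right, Nat.choose_succ_succ' n 1]
      simp [add_comm]
    simp only [dilationStep, coeff_add, coeff_X_mul, comp_C_mul_X_coeff, coeff_deformedBinomial,
      Nat.choose_succ_succ, h_exp, pow_add, Nat.cast_add]
    ring

end DeformedBinomial

section Lacunary

/-- The first `N` terms of `a` are positive and each is less than `q` times the previous one. -/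
structure IsLacunary (q : ℝ) (N : ℕ) (a : ℕ → ℝ) : Prop where
  pos : ∀ k < N, 0 < a k
  succ_lt : ∀ k, k + 1 < N → a (k + 1) < q * a k

variable {q : ℝ} {N : ℕ} {a : ℕ → ℝ}

namespace IsLacunary

lemma strictAntiOn (ha : IsLacunary q N a) (hq1 : q ≤ 1) : StrictAntiOn a (Set.Iio N) :=
  strictAntiOn_of_add_one_lt Set.ordConnected_Iio fun k _ hk hk' =>
    (ha.succ_lt k hk').trans_le (mul_le_of_le_one_left (ha.pos k hk).le hq1)

lemma lt_mul (ha : IsLacunary q N a) (hq1 : q ≤ 1) {i j : ℕ} (hij : i < j) (hj : j < N) :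
    a j < q * a i :=
  ((ha.strictAntiOn hq1).antitoneOn (Set.mem_Iio.2 (by omega)) (Set.mem_Iio.2 hj) hij).trans_lt
    (ha.succ_lt i (by omega))

lemma sign_dilationStep_at_zero (ha : IsLacunary q N a) (hq1 : q < 1) {k : ℕ}
    (hk : k < N) :
    0 < (-1) ^ (k + 1) * (dilationStep q (linProd a N)).eval (-(a k)⁻¹) := by
  have hak := ha.pos k hk
  have h_sign : 0 < (-1) ^ k * (linProd a N).eval (-(q * (a k)⁻¹)) := by
    refine neg_one_pow_mul_eval_linProd_neg_pos hk.le (fun j hj => ?_) (fun j hkj hj => ?_) <;>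
      rw [← mul_assoc, mul_comm (a j), ← div_eq_mul_inv]
    · exact (one_lt_div hak).2 (ha.lt_mul hq1.le hj hk)
    · refine (div_lt_one hak).2 ((mul_lt_of_lt_one_left (ha.pos j hj) hq1).trans_le ?_)
      exact (ha.strictAntiOn hq1.le).antitoneOn hk hj hkj
  rw [eval_dilationStep, eval_linProd_neg_inv hk hak.ne']
  calc 0 < (a k)⁻¹ * ((-1) ^ k * (linProd a N).eval (-(q * (a k)⁻¹))) :=
        mul_pos (inv_pos.2 hak) h_sign
    _ = _ := by rw [mul_neg q]; ring

lemma sign_dilationStep_at_dilated_zero (ha : IsLacunary q N a) (hq0 : 0 < q) (hq1 : q < 1) {k : ℕ}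
    (hk : k < N) :
    0 < (-1) ^ (k + 1) * (dilationStep q (linProd a N)).eval (-(q * a k)⁻¹) := by
  have hak := ha.pos k hk
  have hqak : 0 < q * a k := mul_pos hq0 hak
  have h_dilate : q * -(q * a k)⁻¹ = -(a k)⁻¹ := by field_simp
  rw [eval_dilationStep, h_dilate, eval_linProd_neg_inv hk hak.ne', mul_zero, add_zero]
  refine neg_one_pow_mul_eval_linProd_neg_pos hk (fun j hj => ?_) (fun j hkj hj => ?_) <;>
    rw [← div_eq_mul_inv]
  · refine (one_lt_div hqak).2 ((mul_lt_of_lt_one_left hak hq1).trans_le ?_)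
    exact (ha.strictAntiOn hq1.le).antitoneOn (Set.mem_Iio.2 (by omega)) hk (Nat.lt_succ_iff.1 hj)
  · exact (div_lt_one hqak).2 (ha.lt_mul hq1.le hkj hj)

end IsLacunary

lemma eventually_sign_dilationStep (hq0 : 0 < q) (ha : ∀ k < N, 0 < a k) :
    ∀ᶠ s in atTop, 0 < (-1) ^ (N + 1) * (dilationStep q (linProd a N)).eval (-s) := by
  have h_large : ∀ᶠ s : ℝ in atTop, ∀ k ∈ Finset.range N, 1 < a k * s ∧ 2 < q * a k * s := by
    refine (eventually_all_finset _).2 fun k hk => ?_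
    have hak := ha k (Finset.mem_range.1 hk)
    exact ((tendsto_id.const_mul_atTop hak).eventually_gt_atTop 1).and
      ((tendsto_id.const_mul_atTop (mul_pos hq0 hak)).eventually_gt_atTop 2)
  have h_mul : ∀ᶠ s : ℝ in atTop, 1 < (q / 2) ^ N * s :=
    (tendsto_id.const_mul_atTop (by positivity)).eventually_gt_atTop 1
  filter_upwards [h_large, h_mul, eventually_gt_atTop 0] with s hs hsN hs0
  have h_eval : (-1) ^ (N + 1) * (dilationStep q (linProd a N)).eval (-s)
      = s * ∏ k ∈ Finset.range N, (q * a k * s - 1) - ∏ k ∈ Finset.range N, (a k * s - 1) := by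
    rw [eval_dilationStep, mul_neg q, eval_linProd_neg, eval_linProd_neg,
      ← neg_one_pow_mul_prod_range_one_sub, ← neg_one_pow_mul_prod_range_one_sub]
    simp only [mul_left_comm (a _) q, mul_assoc]
    ring
  rw [h_eval, sub_pos]
  calc ∏ k ∈ Finset.range N, (a k * s - 1) ≤ ∏ k ∈ Finset.range N, (a k * s) :=
        Finset.prod_le_prod (fun k hk => (sub_pos.2 (hs k hk).1).le) fun k _ => by linarith
    _ < (q / 2) ^ N * s * ∏ k ∈ Finset.range N, (a k * s) :=
        lt_mul_of_one_lt_left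
          (Finset.prod_pos fun k hk => mul_pos (ha k (Finset.mem_range.1 hk)) hs0) hsN
    _ = s * ∏ k ∈ Finset.range N, (q / 2 * (a k * s)) := by
        rw [Finset.prod_mul_distrib (f := fun _ => q / 2), Finset.prod_const, Finset.card_range]
        ring
    _ ≤ s * ∏ k ∈ Finset.range N, (q * a k * s - 1) := by
        refine mul_le_mul_of_nonneg_left
          (Finset.prod_le_prod (fun k hk => ?_) fun k hk => ?_) hs0.le
        all_goals linarith [(hs k hk).2]

/-- The new last term marks a point beyond all zeros, replacing `-∞` as an interlacing endpoint. -/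
lemma IsLacunary.exists_extension (ha : IsLacunary q N a) (hq0 : 0 < q) :
    ∃ a' : ℕ → ℝ, IsLacunary q (N + 1) a' ∧ linProd a' N = linProd a N ∧
      0 < (-1) ^ (N + 1) * (dilationStep q (linProd a N)).eval (-(a' N)⁻¹) := by
  obtain ⟨s, h_sign, hs0, hs⟩ := ((eventually_sign_dilationStep hq0 ha.pos).and
    ((eventually_gt_atTop 0).and (eventually_gt_atTop (q * a (N - 1))⁻¹))).exists
  refine ⟨Function.update a N s⁻¹, ⟨fun k hk => ?_, fun k hk => ?_⟩, ?_, by simpa using h_sign⟩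
  · rcases (Nat.lt_succ_iff.1 hk).eq_or_lt with rfl | hk
    · simpa using hs0
    · simpa [hk.ne] using ha.pos k hk
  · have hkN : k < N := by omega
    rcases (Nat.lt_succ_iff.1 hk).eq_or_lt with rfl | hk
    · simpa [hkN.ne] using inv_lt_of_inv_lt₀ (mul_pos hq0 (ha.pos k hkN)) hs
    · simpa [hkN.ne, hk.ne] using ha.succ_lt k hk
  · refine Finset.prod_congr rfl fun k hk => ?_
    rw [Function.update_of_ne (Finset.mem_range.1 hk).ne]

lemma IsLacunary.exists_interlacing_zero (ha : IsLacunary q (N + 1) a) (hq0 : 0 < q) (hq1 : q < 1)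
    (h_last : 0 < (-1) ^ (N + 1) * (dilationStep q (linProd a N)).eval (-(a N)⁻¹))
    {k : ℕ} (hk : k ≤ N) :
    ∃ b, a k < b ∧ (∀ j, k = j + 1 → b < q * a j) ∧
      (dilationStep q (linProd a N)).eval (-b⁻¹) = 0 := by
  have ha_init : IsLacunary q N a :=
    ⟨fun k hk => ha.pos k (by omega), fun k hk => ha.succ_lt k (by omega)⟩
  have h_zero : 0 < (-1) ^ (k + 1) * (dilationStep q (linProd a N)).eval (-(a k)⁻¹) := by
    rcases hk.eq_or_lt with rfl | hk
    · exact h_last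
    · exact ha_init.sign_dilationStep_at_zero hq1 hk
  have hak := ha.pos k (by omega)
  cases k with
  | zero =>
    have h_origin : 0 < (-1) ^ 0 * (dilationStep q (linProd a N)).eval (-0) := by
      simp [eval_dilationStep, eval_linProd]
    obtain ⟨r, ⟨hr0, hr⟩, h_root⟩ :=
      exists_eval_neg_eq_zero_of_sign_change (inv_pos.2 hak) h_origin h_zero
    exact ⟨r⁻¹, (lt_inv_comm₀ hr0 hak).1 hr, by simp, by simpa using h_root⟩
  | succ j =>
    have hqaj : 0 < q * a j := mul_pos hq0 (ha.pos j (by omega))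
    obtain ⟨r, ⟨hr', hr⟩, h_root⟩ := exists_eval_neg_eq_zero_of_sign_change
      ((inv_lt_inv₀ hqaj hak).2 (ha.succ_lt j (by omega)))
      (ha_init.sign_dilationStep_at_dilated_zero hq0 hq1 hk) h_zero
    have hr0 : 0 < r := (inv_pos.2 hqaj).trans hr'
    refine ⟨r⁻¹, (lt_inv_comm₀ hr0 hak).1 hr, ?_, by simpa using h_root⟩
    rintro i ⟨⟩
    exact inv_lt_of_inv_lt₀ hqaj hr'

lemma IsLacunary.exists_dilationStep_eq_linProd (ha : IsLacunary q N a) (hq0 : 0 < q)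
    (hq1 : q < 1) :
    ∃ b, IsLacunary q (N + 1) b ∧ dilationStep q (linProd a N) = linProd b (N + 1) := by
  obtain ⟨a, ha, h_eq, h_last⟩ := ha.exists_extension hq0
  rw [← h_eq] at h_last ⊢
  have h_exists (k : ℕ) : ∃ b, k ≤ N → a k < b ∧ (∀ j, k = j + 1 → b < q * a j) ∧
      (dilationStep q (linProd a N)).eval (-b⁻¹) = 0 := by
    by_cases hk : k ≤ N
    · exact (ha.exists_interlacing_zero hq0 hq1 h_last hk).imp fun _ h _ => h
    · exact ⟨0, fun h => absurd h hk⟩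
  choose b hb using h_exists
  have hb_lac : IsLacunary q (N + 1) b :=
    ⟨fun k hk => (ha.pos k hk).trans (hb k (by omega)).1,
      fun k hk => ((hb (k + 1) (by omega)).2.1 k rfl).trans
        (mul_lt_mul_of_pos_left (hb k (by omega)).1 hq0)⟩
  refine ⟨b, hb_lac, eq_linProd_of_eval_neg_inv_eq_zero ?_ ?_ (fun k hk => (hb_lac.pos k hk).ne')
    (hb_lac.strictAntiOn hq1.le).injOn fun k hk => (hb k (by omega)).2.2⟩
  · exact (natDegree_dilationStep_le q _).trans (Nat.succ_le_succ (natDegree_linProd_le a N))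
  · simp [eval_dilationStep, eval_linProd]

lemma exists_deformedBinomial_eq_linProd (hq0 : 0 < q) (hq1 : q < 1) (N : ℕ) :
    ∃ a, IsLacunary q N a ∧ deformedBinomial q N = linProd a N := by
  induction N with
  | zero => exact ⟨0, ⟨by simp, by simp⟩, by simp [deformedBinomial_zero, linProd]⟩
  | succ N ih =>
    obtain ⟨a, ha, h_eq⟩ := ih
    rw [deformedBinomial_succ, h_eq]
    exact ha.exists_dilationStep_eq_linProd hq0 hq1

end Lacunary

section GeometricDecay

/-- The nonnegative sequences starting at most at `1` and shrinking at least by the factor `q` in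
each step: a compact set containing the parameters of all rescaled deformed binomials. -/
def geometricDecay (q : ℝ) : Set (ℕ → ℝ) :=
  {b | b 0 ≤ 1 ∧ ∀ k, 0 ≤ b k ∧ b (k + 1) ≤ q * b k}

variable {q : ℝ} {b : ℕ → ℝ}

lemma le_pow_of_mem_geometricDecay (hq0 : 0 ≤ q) (hb : b ∈ geometricDecay q) (k : ℕ) :
    b k ≤ q ^ k :=
  (le_geom hq0 k fun j _ => (hb.2 j).2).trans (mul_le_of_le_one_right (pow_nonneg hq0 k) hb.1)

lemma isCompact_geometricDecay (hq0 : 0 ≤ q) : IsCompact (geometricDecay q) := by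
  refine (isCompact_univ_pi fun k => isCompact_Icc (a := (0 : ℝ)) (b := q ^ k)).of_isClosed_subset
    ?_ fun b hb k _ => ⟨(hb.2 k).1, le_pow_of_mem_geometricDecay hq0 hb k⟩
  simp only [geometricDecay, Set.ofPred_and, Set.ofPred_forall]
  exact (isClosed_le (by fun_prop) (by fun_prop)).inter <| isClosed_iInter fun k =>
    (isClosed_le (by fun_prop) (by fun_prop)).inter (isClosed_le (by fun_prop) (by fun_prop))

lemma norm_mul_le_of_mem_geometricDecay (hq0 : 0 ≤ q) (hb : b ∈ geometricDecay q) (z : ℂ) (k : ℕ) :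
    ‖(b k : ℂ) * z‖ ≤ q ^ k * ‖z‖ := by
  rw [norm_mul, Complex.norm_of_nonneg (hb.2 k).1]
  exact mul_le_mul_of_nonneg_right (le_pow_of_mem_geometricDecay hq0 hb k) (norm_nonneg z)

lemma summable_norm_mul_of_mem_geometricDecay (hq0 : 0 ≤ q) (hq1 : q < 1)
    (hb : b ∈ geometricDecay q) (z : ℂ) : Summable fun k => ‖(b k : ℂ) * z‖ :=
  ((summable_geometric_of_lt_one hq0 hq1).mul_right ‖z‖).of_nonneg_of_le
    (fun _ => norm_nonneg _) (norm_mul_le_of_mem_geometricDecay hq0 hb z)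

lemma continuousOn_tprod_geometricDecay (hq0 : 0 ≤ q) (hq1 : q < 1) (z : ℂ) :
    ContinuousOn (fun b : ℕ → ℝ => ∏' k, (1 + (b k : ℂ) * z)) (geometricDecay q) := fun b _ =>
  tendsto_tprod_one_add_of_dominated_convergence
    ((summable_geometric_of_lt_one hq0 hq1).mul_right ‖z‖)
    (fun k => (Continuous.tendsto (by fun_prop) b).mono_left nhdsWithin_le_nhds)
    (eventually_mem_nhdsWithin.mono fun _ hb => norm_mul_le_of_mem_geometricDecay hq0 hb z)

lemma eq_zero_of_mem_geometricDecay (hb : b ∈ geometricDecay q) {K k : ℕ} (hK : b K = 0)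
    (hk : K ≤ k) : b k = 0 := by
  induction k, hk using Nat.le_induction with
  | base => exact hK
  | succ k _ ih => exact le_antisymm (by simpa [ih] using (hb.2 k).2) (hb.2 (k + 1)).1

lemma IsLacunary.indicator_mem_geometricDecay {N : ℕ} {a : ℕ → ℝ} (ha : IsLacunary q N a)
    (hq0 : 0 ≤ q) (h_sum : ∑ k ∈ Finset.range N, a k ≤ 1) :
    (Set.Iio N).indicator a ∈ geometricDecay q := by
  have h_nonneg : ∀ k, 0 ≤ (Set.Iio N).indicator a k :=
    Set.indicator_nonneg fun k hk => (ha.pos k hk).le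
  refine ⟨Set.indicator_apply_le' (fun hN => ?_) fun _ => zero_le_one, fun k => ⟨h_nonneg k, ?_⟩⟩
  · exact (Finset.single_le_sum (fun k hk => (ha.pos k (Finset.mem_range.1 hk)).le)
      (Finset.mem_range.2 hN)).trans h_sum
  · refine Set.indicator_apply_le' (fun hk => ?_) fun _ => mul_nonneg hq0 (h_nonneg k)
    rw [Set.indicator_of_mem (Set.mem_Iio.2 ((Nat.lt_succ_self k).trans hk))]
    exact (ha.succ_lt k hk).le

lemma exists_eval_deformedBinomial_eq_tprod (hq0 : 0 < q) (hq1 : q < 1) (N : ℕ) :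
    ∃ b ∈ geometricDecay q,
      ∀ z : ℂ, (deformedBinomial (q : ℂ) N).eval (z / N) = ∏' k, (1 + (b k : ℂ) * z) := by
  obtain ⟨a, ha, h_eq⟩ := exists_deformedBinomial_eq_linProd hq0 hq1 N
  have h_sum : ∑ k ∈ Finset.range N, a k = N := by
    rw [← coeff_one_linProd, ← h_eq, coeff_deformedBinomial]
    simp
  have ha_scaled : IsLacunary q N fun k => a k / N := by
    refine ⟨fun k hk => div_pos (ha.pos k hk) (Nat.cast_pos.2 (by omega)), fun k hk => ?_⟩
    rw [← mul_div_assoc]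
    exact div_lt_div_of_pos_right (ha.succ_lt k hk) (Nat.cast_pos.2 (by omega))
  have h_sum_scaled : ∑ k ∈ Finset.range N, a k / N ≤ 1 := by
    rw [← Finset.sum_div, h_sum]
    exact div_self_le_one _
  have h_complex : deformedBinomial (q : ℂ) N = linProd (fun k => (a k : ℂ)) N := by
    simpa [map_deformedBinomial, map_linProd] using congrArg (Polynomial.map Complex.ofRealHom) h_eq
  refine ⟨_, ha_scaled.indicator_mem_geometricDecay hq0.le h_sum_scaled, fun z => ?_⟩
  rw [h_complex, eval_linProd, tprod_eq_prod (s := Finset.range N)]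
  · refine Finset.prod_congr rfl fun k hk => ?_
    rw [Set.indicator_of_mem (Set.mem_Iio.2 (Finset.mem_range.1 hk))]
    push_cast
    ring
  · intro k hk
    simp [Finset.mem_range.not.1 hk]

end GeometricDecay

section DeformedExp

/-- The deformed exponential function `∑ n, z ^ n * q ^ (n * (n - 1) / 2) / n!`. -/
noncomputable def deformedExp {𝕜 : Type*} [Field 𝕜] [TopologicalSpace 𝕜] (q z : 𝕜) : 𝕜 :=
  ∑' n : ℕ, z ^ n * q ^ (n * (n - 1) / 2) / (n.factorial : 𝕜)

lemma ofReal_deformedExp (q t : ℝ) : ((deformedExp q t : ℝ) : ℂ) = deformedExp (q : ℂ) (t : ℂ) := by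
  simp [deformedExp, Complex.ofReal_tsum]

lemma choose_mul_inv_pow_le (N n : ℕ) : (N.choose n : ℝ) * (N : ℝ)⁻¹ ^ n ≤ (n.factorial : ℝ)⁻¹ :=
  calc (N.choose n : ℝ) * (N : ℝ)⁻¹ ^ n
      ≤ (N : ℝ) ^ n / n.factorial * (N : ℝ)⁻¹ ^ n := by gcongr; exact Nat.choose_le_pow_div n N
    _ = (N * (N : ℝ)⁻¹) ^ n * (n.factorial : ℝ)⁻¹ := by rw [mul_pow]; ring
    _ ≤ (n.factorial : ℝ)⁻¹ :=
      mul_le_of_le_one_left (by positivity) (pow_le_one₀ (by positivity) mul_inv_le_one)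

lemma tendsto_choose_mul_inv_pow (n : ℕ) :
    Tendsto (fun N : ℕ => (N.choose n : ℝ) * (N : ℝ)⁻¹ ^ n) atTop (𝓝 (n.factorial : ℝ)⁻¹) := by
  have h_one : Tendsto (fun N : ℕ => (N : ℝ) * (N : ℝ)⁻¹) atTop (𝓝 1) :=
    tendsto_const_nhds.congr' <| (eventually_ne_atTop 0).mono fun N hN =>
      (mul_inv_cancel₀ (Nat.cast_ne_zero.2 hN)).symm
  simpa using ProbabilityTheory.tendsto_choose_mul_pow_atTop n h_one

lemma eval_deformedBinomial_div (q z : ℂ) (N : ℕ) :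
    (deformedBinomial q N).eval (z / N) =
      ∑' n : ℕ, ((N.choose n * (N : ℝ)⁻¹ ^ n : ℝ) : ℂ) * (z ^ n * q ^ (n * (n - 1) / 2)) := by
  rw [tsum_eq_sum (s := Finset.range (N + 1))]
  · simp only [deformedBinomial, eval_finsetSum, eval_mul, eval_C, eval_pow, eval_X]
    refine Finset.sum_congr rfl fun n _ => ?_
    push_cast
    ring
  · intro n hn
    simp [Nat.choose_eq_zero_of_lt (show N < n by simpa using hn)]

lemma tendsto_eval_deformedBinomial {q : ℂ} (hq : ‖q‖ ≤ 1) (z : ℂ) :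
    Tendsto (fun N : ℕ => (deformedBinomial q N).eval (z / N)) atTop (𝓝 (deformedExp q z)) := by
  simp_rw [eval_deformedBinomial_div]
  refine tendsto_tsum_of_dominated_convergence (Real.summable_pow_div_factorial ‖z‖)
    (fun n => ?_) (Eventually.of_forall fun N n => ?_)
  · have h_coeff := (Complex.continuous_ofReal.tendsto _).comp (tendsto_choose_mul_inv_pow n)
    convert! h_coeff.mul_const (z ^ n * q ^ (n * (n - 1) / 2)) using 2
    push_cast
    ring
  · rw [norm_mul, norm_mul, norm_pow, norm_pow, Complex.norm_of_nonneg (by positivity)]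
    calc _ ≤ (n.factorial : ℝ)⁻¹ * (‖z‖ ^ n * 1) := by
          gcongr
          · exact choose_mul_inv_pow_le N n
          · exact pow_le_one₀ (norm_nonneg q) hq
      _ = ‖z‖ ^ n / n.factorial := by ring

lemma mul_pow_le_deformedExp {q t : ℝ} (hq0 : 0 ≤ q) (hq1 : q ≤ 1) (ht : 0 ≤ t) (n : ℕ) :
    q ^ (n * (n - 1) / 2) / n.factorial * t ^ n ≤ deformedExp q t := by
  have h_summable : Summable fun n : ℕ => t ^ n * q ^ (n * (n - 1) / 2) / n.factorial := by
    refine (Real.summable_pow_div_factorial t).of_nonneg_of_le (fun n => by positivity) fun n => ?_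
    gcongr
    exact mul_le_of_le_one_right (by positivity) (pow_le_one₀ hq0 hq1)
  calc _ = t ^ n * q ^ (n * (n - 1) / 2) / n.factorial := by ring
    _ ≤ _ := h_summable.le_tsum n fun _ _ => by positivity

lemma exists_deformedExp_ne_eval {q : ℝ} (hq0 : 0 < q) (hq1 : q ≤ 1) (P : ℝ[X]) :
    ∃ t : ℝ, deformedExp q t ≠ P.eval t := by
  by_contra! h_eq
  have h_deg : P.natDegree + 1 ≤ P.natDegree :=
    le_natDegree_of_forall_mul_pow_le_eval (by positivity) fun t ht =>
      h_eq t ▸ mul_pow_le_deformedExp hq0.le hq1 ht _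
  omega

lemma exists_deformedExp_eq_tprod {q : ℝ} (hq0 : 0 < q) (hq1 : q < 1) :
    ∃ c ∈ geometricDecay q, ∀ z : ℂ, deformedExp (q : ℂ) z = ∏' k, (1 + (c k : ℂ) * z) := by
  choose b hb h_eval using exists_eval_deformedBinomial_eq_tprod hq0 hq1
  obtain ⟨c, hc, φ, hφ, hlim⟩ := (isCompact_geometricDecay hq0.le).tendsto_subseq hb
  refine ⟨c, hc, fun z => ?_⟩
  have hq_norm : ‖(q : ℂ)‖ ≤ 1 := by rw [Complex.norm_of_nonneg hq0.le]; exact hq1.le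
  have h_exp := (tendsto_eval_deformedBinomial hq_norm z).comp hφ.tendsto_atTop
  have h_prod := (continuousOn_tprod_geometricDecay hq0.le hq1 z c hc).tendsto.comp
    (tendsto_nhdsWithin_iff.2 ⟨hlim, Eventually.of_forall fun n => hb (φ n)⟩)
  exact tendsto_nhds_unique h_exp (h_prod.congr fun n => (h_eval (φ n) z).symm)

lemma pos_of_deformedExp_eq_tprod {q : ℝ} (hq0 : 0 < q) (hq1 : q ≤ 1) {c : ℕ → ℝ}
    (hc : c ∈ geometricDecay q)
    (h_prod : ∀ z : ℂ, deformedExp (q : ℂ) z = ∏' k, (1 + (c k : ℂ) * z)) (K : ℕ) : 0 < c K := by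
  refine (hc.2 K).1.lt_of_ne' fun hK => ?_
  obtain ⟨t, ht⟩ := exists_deformedExp_ne_eval hq0 hq1 (linProd c K)
  refine ht (Complex.ofReal_injective ?_)
  rw [ofReal_deformedExp, h_prod, eval_linProd, tprod_eq_prod (s := Finset.range K)]
  · push_cast
    rfl
  · intro k hk
    simp [eq_zero_of_mem_geometricDecay hc hK (not_lt.1 (Finset.mem_range.not.1 hk))]

end DeformedExp

/-- For `0 < q < 1`, the deformed exponential function
`f(z) = Σ_{n=0}^∞ z^n q^{n(n-1)/2}/n!` admits the infinite product representation
`f(z) = ∏_{n=1}^∞ (1 - z/x_n)`, where `(x_n)` is the strictly decreasing sequence of its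
(negative real) zeros. -/
theorem infinite_product_representation (q : ℝ) (hq0 : 0 < q) (hq1 : q < 1)
    (f : ℂ → ℂ)
    (hf : ∀ z : ℂ, f z = ∑' n : ℕ, z ^ n * (q : ℂ) ^ (n * (n - 1) / 2) / (n.factorial : ℂ)) :
    ∃ x : ℕ → ℝ, StrictAnti x ∧ (∀ n : ℕ, x n < 0)
      ∧ (∀ z : ℂ, f z = 0 ↔ ∃ n : ℕ, z = (x n : ℂ))
      ∧ (∀ z : ℂ, f z = ∏' n : ℕ, (1 - z / (x n : ℂ))) := by
  obtain ⟨c, hc, h_prod⟩ := exists_deformedExp_eq_tprod hq0 hq1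
  have hc_pos := pos_of_deformedExp_eq_tprod hq0 hq1.le hc h_prod
  have hc_ne (n : ℕ) : (c n : ℂ) ≠ 0 := Complex.ofReal_ne_zero.2 (hc_pos n).ne'
  have h_factor (z : ℂ) (n : ℕ) : 1 + c n * z = 0 ↔ z = ((-(c n)⁻¹ : ℝ) : ℂ) := by
    rw [add_comm, add_eq_zero_iff_eq_neg, ← eq_inv_mul_iff_mul_eq₀ (hc_ne n)]
    simp
  obtain rfl : f = deformedExp (q : ℂ) := funext hf
  refine ⟨fun n => -(c n)⁻¹, strictAnti_nat_of_succ_lt fun n => ?_, fun n => ?_, fun z => ?_,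
    fun z => ?_⟩
  · have h_lt : c (n + 1) < c n := (hc.2 n).2.trans_lt (mul_lt_of_lt_one_left (hc_pos n) hq1)
    exact neg_lt_neg ((inv_lt_inv₀ (hc_pos n) (hc_pos (n + 1))).2 h_lt)
  · exact neg_neg_of_pos (inv_pos.2 (hc_pos n))
  · rw [h_prod, tprod_one_add_eq_zero_iff (summable_norm_mul_of_mem_geometricDecay hq0.le hq1 hc z)]
    simp only [h_factor]
  · rw [h_prod]
    exact tprod_congr fun n => by simp [div_eq_mul_inv, mul_comm z]
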